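/- Let n ≥ 1, let a := (2+√n)/(2+2√n), b := 1−a and c(n) := (√n+1)²+1. Then for every real x and every real t ≥ 0, 2·(2 − 2x + a·x² + (b/n)·t²) ≥ (1/c(n))·(t+2)². -/

import Mathlib

/-- With `a = (2+√n)/(2+2√n)`, `b = 1−a` and `c(n) = (√n+1)²+1`, for every
real `x` and every `t ≥ 0`, `2·(2 − 2x + a·x² + (b/n)·t²) ≥ (1/c(n))·(t+2)²`. -/
theorem stmt_3 (n : ℕ) (hn : 1 ≤ n) (x t : ℝ) (ht : 0 ≤ t) :
    (1 / ((Real.sqrt n + 1) ^ 2 + 1)) * (t + 2) ^ 2 ≤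
      2 * (2 - 2 * x + ((2 + Real.sqrt n) / (2 + 2 * Real.sqrt n)) * x ^ 2 +
        ((1 - (2 + Real.sqrt n) / (2 + 2 * Real.sqrt n)) / (n : ℝ)) * t ^ 2) := by
  have hn' : (1 : ℝ) ≤ n := by exact_mod_cast hn
  have hs : 0 < Real.sqrt n := Real.sqrt_pos.mpr (by linarith)
  have hsq : (n : ℝ) = Real.sqrt n ^ 2 := (Real.sq_sqrt (by linarith)).symm
  generalize Real.sqrt n = s at *
  rw [hsq, ← sub_nonneg]
  have key : 2 * (2 - 2 * x + ((2 + s) / (2 + 2 * s)) * x ^ 2 +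
        ((1 - (2 + s) / (2 + 2 * s)) / s ^ 2) * t ^ 2)
        - (1 / ((s + 1) ^ 2 + 1)) * (t + 2) ^ 2
      = ((2 + s) / (1 + s)) * (x - (2 + 2 * s) / (2 + s)) ^ 2
        + ((2 + s) * t - 2 * (s * (1 + s))) ^ 2
          / (s * (1 + s) * (2 + s) * ((s + 1) ^ 2 + 1)) := by
    have h1 : 1 + s ≠ 0 := by positivity
    have h2 : 2 + s ≠ 0 := by positivity
    have h3 : (s + 1) ^ 2 + 1 ≠ 0 := by positivity
    have h4 : 2 + 2 * s = 2 * (1 + s) := by ring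
    rw [h4]
    field_simp
    ring
  rw [key]
  positivity
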